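/- Let x₁, …, xₙ be indices with weights ω₁, …, ωₙ ∈ (0,1] summing to 1, and let I₁, I₂, I₃ be families of intuitionistic fuzzy values (α_j^{(1)})_{j=1}^n, (α_j^{(2)})_{j=1}^n, (α_j^{(3)})_{j=1}^n. Define d_Wu(I, I') = Σ_{j=1}^n ω_j · JS(α_j, α'_j). If α_j^{(1)} ⊂ α_j^{(2)} ⊂ α_j^{(3)} in Atanassov's order for every j, and I₁ ≠ I₂ and I₂ ≠ I₃, then d_Wu(I₁, I₂) < d_Wu(I₁, I₃) and d_Wu(I₂, I₃) < d_Wu(I₁, I₃). -/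

import Mathlib

/-- `L p q = p·log₂(2p/(p+q)) + q·log₂(2q/(p+q))`, with Lean's conventions
`0 * log₂ _ = 0` and `x / 0 = 0`, `log₂ 0 = 0` implementing `0·log 0 = 0`
and `0·log(0/0) = 0`. -/
noncomputable def L (p q : ℝ) : ℝ :=
  p * Real.logb 2 (2 * p / (p + q)) + q * Real.logb 2 (2 * q / (p + q))

/-- An intuitionistic fuzzy value: a pair `⟨μ, ν⟩` with `0 ≤ μ`, `0 ≤ ν`,
`μ + ν ≤ 1` (hence also `μ ≤ 1` and `ν ≤ 1`). -/
@[ext]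
structure IFV where
  mu : ℝ
  nu : ℝ
  mu_nonneg : 0 ≤ mu
  nu_nonneg : 0 ≤ nu
  sum_le : mu + nu ≤ 1

/-- `Z(α,β) = L(1−μ_α, 1−μ_β) + L(ν_α, ν_β)`. -/
noncomputable def Z (a b : IFV) : ℝ := L (1 - a.mu) (1 - b.mu) + L a.nu b.nu

/-- The normalized Jensen–Shannon IF divergence `JS(α,β) = √(Z(α,β)/2)`. -/
noncomputable def JS (a b : IFV) : ℝ := Real.sqrt (Z a b / 2)

/-- Atanassov's order: `α ⊂ β` iff `μ_α ≤ μ_β` and `ν_α ≥ ν_β`. -/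
def IFV.sub (a b : IFV) : Prop := a.mu ≤ b.mu ∧ b.nu ≤ a.nu

/-- Strict Atanassov order: `α ⊊ β` iff `α ⊂ β` and `α ≠ β`. -/
def IFV.ssub (a b : IFV) : Prop := a.sub b ∧ a ≠ b

/-- The IFV `⟨1, 0⟩`. -/
def IFV.posOne : IFV := ⟨1, 0, by norm_num, le_rfl, by norm_num⟩

/-- The IFV `⟨0, 1⟩`. -/
def IFV.negOne : IFV := ⟨0, 1, le_rfl, by norm_num, by norm_num⟩

theorem L_eq {p q : ℝ} (hp : 0 ≤ p) (hq : 0 ≤ q) :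
    L p q = (p * Real.log p + q * Real.log q
      - 2 * ((p + q) / 2 * Real.log ((p + q) / 2))) / Real.log 2 := by
  have key : ∀ x s : ℝ, 0 ≤ x → x ≤ s →
      x * Real.log (2 * x / s) = x * (Real.log x - Real.log (s / 2)) := by
    intro x s hx hs
    rcases hx.eq_or_lt with h | h
    · simp [← h]
    · rw [← Real.log_div h.ne' (by linarith)]
      congr 2
      have : s ≠ 0 := by linarith
      field_simp
  have h1 := key p (p + q) hp (by linarith)
  have h2 := key q (p + q) hq (by linarith)
  unfold L Real.logb
  rw [← mul_div_assoc, ← mul_div_assoc, h1, h2]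
  ring

theorem L_comm' (p q : ℝ) : L p q = L q p := by
  unfold L
  rw [add_comm q p]
  ring

theorem L_self {p : ℝ} (hp : 0 ≤ p) : L p p = 0 := by
  rw [L_eq hp hp, show (p + p) / 2 = p by ring]
  ring

theorem aux_cont (p : ℝ) : Continuous (fun x : ℝ => p * Real.log p + x * Real.log x
      - 2 * ((p + x) / 2 * Real.log ((p + x) / 2))) := by
  have h := Real.continuous_mul_log
  have h2 : Continuous (fun x : ℝ => (p + x) / 2 * Real.log ((p + x) / 2)) :=
    h.comp (by fun_prop : Continuous fun x : ℝ => (p + x) / 2)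
  exact (continuous_const.add h).sub (continuous_const.mul h2)

theorem aux_deriv {p x : ℝ} (hp : 0 ≤ p) (hx : 0 < x) :
    deriv (fun x : ℝ => p * Real.log p + x * Real.log x
      - 2 * ((p + x) / 2 * Real.log ((p + x) / 2))) x
      = Real.log x - Real.log ((p + x) / 2) := by
  have h1 := Real.hasDerivAt_mul_log hx.ne'
  have h2 := Real.hasDerivAt_mul_log (x := (p + x) / 2) (by positivity)
  have h3 : HasDerivAt (fun x : ℝ => (p + x) / 2) (1 / 2) x :=
    ((hasDerivAt_id x).const_add p).div_const 2
  have h4 := h2.comp x h3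
  have h5 := (h1.const_add (p * Real.log p)).sub (h4.const_mul 2)
  refine HasDerivAt.deriv (h5.congr_deriv ?_)
  ring

theorem L_lt_right {p q r : ℝ} (hr : 0 ≤ r) (hrq : r < q) (hqp : q ≤ p) : L p q < L p r := by
  have hp : 0 ≤ p := by linarith
  rw [L_eq hp (by linarith), L_eq hp hr]
  refine div_lt_div_of_pos_right ?_ (Real.log_pos (by norm_num))
  refine strictAntiOn_of_deriv_neg (convex_Icc 0 p) (aux_cont p).continuousOn ?_
    (Set.mem_Icc.2 ⟨hr, by linarith⟩) (Set.mem_Icc.2 ⟨by linarith, hqp⟩) hrq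
  intro x hx
  rw [interior_Icc] at hx
  rw [aux_deriv hp hx.1]
  exact sub_neg.2 (Real.log_lt_log hx.1 (by linarith [hx.2]))

theorem L_lt_left {p q r : ℝ} (hr : 0 ≤ r) (hrq : r ≤ q) (hqp : q < p) : L q r < L p r := by
  rw [L_comm' q, L_comm' p, L_eq hr (by linarith), L_eq hr (by linarith)]
  refine div_lt_div_of_pos_right ?_ (Real.log_pos (by norm_num))
  refine strictMonoOn_of_deriv_pos (convex_Ici r) (aux_cont r).continuousOn ?_
    (Set.mem_Ici.2 hrq) (Set.mem_Ici.2 (by linarith)) hqp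
  intro x hx
  rw [interior_Ici] at hx
  have hx' : r < x := hx
  rw [aux_deriv hr (by linarith)]
  exact sub_pos.2 (Real.log_lt_log (by linarith) (by linarith))

theorem L_le_right {p q r : ℝ} (hr : 0 ≤ r) (hrq : r ≤ q) (hqp : q ≤ p) : L p q ≤ L p r := by
  rcases hrq.eq_or_lt with h | h
  · rw [h]
  · exact (L_lt_right hr h hqp).le

theorem L_le_left {p q r : ℝ} (hr : 0 ≤ r) (hrq : r ≤ q) (hqp : q ≤ p) : L q r ≤ L p r := by
  rcases hqp.eq_or_lt with h | h
  · rw [h]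
  · exact (L_lt_left hr hrq h).le

theorem L_nonneg' {p q : ℝ} (hq : 0 ≤ q) (hqp : q ≤ p) : 0 ≤ L p q := by
  rw [← L_self (hq.trans hqp)]
  exact L_le_right hq hqp le_rfl

theorem IFV.mu_le (a : IFV) : a.mu ≤ 1 := by linarith [a.nu_nonneg, a.sum_le]

theorem Z_nonneg' {a b : IFV} (h : a.sub b) : 0 ≤ Z a b :=
  add_nonneg (L_nonneg' (by linarith [b.mu_le]) (by linarith [h.1])) (L_nonneg' b.nu_nonneg h.2)

theorem lt_of_sub_ne {a b : IFV} (h : a.sub b) (hne : a ≠ b) : a.mu < b.mu ∨ b.nu < a.nu := by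
  by_contra hc
  push Not at hc
  exact hne (IFV.ext (le_antisymm h.1 hc.1) (le_antisymm hc.2 h.2))

theorem JS_lt_right {a b c : IFV} (h : a.sub b) (h' : b.sub c) (hne : b ≠ c) :
    JS a b < JS a c := by
  refine Real.sqrt_lt_sqrt (div_nonneg (Z_nonneg' h) (by norm_num)) ?_
  refine div_lt_div_of_pos_right ?_ (by norm_num)
  have hc : 0 ≤ 1 - c.mu := by linarith [c.mu_le]
  have h1 : 1 - c.mu ≤ 1 - b.mu := by linarith [h'.1]
  have h2 : 1 - b.mu ≤ 1 - a.mu := by linarith [h.1]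
  rcases lt_of_sub_ne h' hne with k | k
  · exact add_lt_add_of_lt_of_le (L_lt_right hc (by linarith) h2)
      (L_le_right c.nu_nonneg h'.2 h.2)
  · exact add_lt_add_of_le_of_lt (L_le_right hc h1 h2) (L_lt_right c.nu_nonneg k h.2)

theorem JS_lt_left {a b c : IFV} (h : a.sub b) (h' : b.sub c) (hne : a ≠ b) :
    JS b c < JS a c := by
  refine Real.sqrt_lt_sqrt (div_nonneg (Z_nonneg' h') (by norm_num)) ?_
  refine div_lt_div_of_pos_right ?_ (by norm_num)
  have hc : 0 ≤ 1 - c.mu := by linarith [c.mu_le]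
  have h1 : 1 - c.mu ≤ 1 - b.mu := by linarith [h'.1]
  have h2 : 1 - b.mu ≤ 1 - a.mu := by linarith [h.1]
  rcases lt_of_sub_ne h hne with k | k
  · exact add_lt_add_of_lt_of_le (L_lt_left hc h1 (by linarith))
      (L_le_left c.nu_nonneg h'.2 h.2)
  · exact add_lt_add_of_le_of_lt (L_le_left hc h1 h2) (L_lt_left c.nu_nonneg h'.2 k)

theorem dWu_strictMono_of_sub_chain (n : ℕ) (w : Fin n → ℝ)
    (hw : ∀ j, 0 < w j ∧ w j ≤ 1) (hsum : ∑ j, w j = 1)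
    (A B C : Fin n → IFV)
    (hAB : ∀ j, (A j).sub (B j)) (hBC : ∀ j, (B j).sub (C j))
    (hne1 : A ≠ B) (hne2 : B ≠ C) :
    ∑ j, w j * JS (A j) (B j) < ∑ j, w j * JS (A j) (C j) ∧
    ∑ j, w j * JS (B j) (C j) < ∑ j, w j * JS (A j) (C j) := by
  constructor
  · obtain ⟨i, hi⟩ := Function.ne_iff.1 hne2
    refine Finset.sum_lt_sum (fun j _ => mul_le_mul_of_nonneg_left ?_ (hw j).1.le)
      ⟨i, Finset.mem_univ i, mul_lt_mul_of_pos_left (JS_lt_right (hAB i) (hBC i) hi) (hw i).1⟩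
    by_cases h : B j = C j
    · rw [h]
    · exact (JS_lt_right (hAB j) (hBC j) h).le
  · obtain ⟨i, hi⟩ := Function.ne_iff.1 hne1
    refine Finset.sum_lt_sum (fun j _ => mul_le_mul_of_nonneg_left ?_ (hw j).1.le)
      ⟨i, Finset.mem_univ i, mul_lt_mul_of_pos_left (JS_lt_left (hAB i) (hBC i) hi) (hw i).1⟩
    by_cases h : A j = B j
    · rw [h]
    · exact (JS_lt_left (hAB j) (hBC j) h).le
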